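/- Let n, k be positive integers with 1 ≤ k ≤ n−1 and let G be a connected finite simple graph on n vertices with vertex connectivity at most k. Then the Laplacian energy satisfies E_L(G) ≤ k(n−2)² + (n−k−2)(n−3)² + [n−2+k/2 + (1/2)·√((k−2n)² + 16(k−n+1))]² + [n−2+k/2 − (1/2)·√((k−2n)² + 16(k−n+1))]², with equality if and only if G is isomorphic to K_k ∨ (K_1 ∪ K_{n−k−1}). -/

import Mathlib

/-!
The trace of `L(G)²` shows `E_L(G) = ∑ v, d(v) (d(v) + 1)` (`EL_eq_degSum`), a quantity which is
strictly monotone in `G` under adding edges (`degSum_mono`, `eq_of_degSum_eq`). If deleting `U`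
disconnects `G`, the remaining vertices split into nonempty sets `S` and `T` with no edge between
them, so `G` is a subgraph of the graph `blk S T` obtained from the complete graph by removing all
edges between `S` and `T`. With `s = |S|`, `t = |T|`, the energy of `blk S T` is
`n² (n - 1) - s t (4 n - 2 - (s + t))` (`degSum_blk`).

Here `s + t ≥ n - k` and `(s - 1) (t - 1) ≥ 0` give `s t ≥ s + t - 1`, and
`w ↦ (w - 1) (4 n - 2 - w)` is strictly increasing on `w ≤ n`. So the loss is at least
`(n - k - 1) (3 n - 2 + k)`, with equality only if `s + t = n - k` and one of `S`, `T` is a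
singleton (`loss_bound`); in that case `blk S T` is `K_k ∨ (K_1 ∪ K_{n-k-1})`. When `k = n - 1`
and no cut is available, the same comparison is made with `T = ∅`, i.e. with `K_n`.
The closed form in the theorem is a rewriting of this bound: the squares of the two conjugate
roots add up to an expression free of square roots, since the discriminant is nonnegative.
-/


open Matrix Finset

noncomputable section

namespace SLP

variable {V : Type*} [Fintype V] [DecidableEq V]

/-- The signless Laplacian matrix `Q(G) = D(G) + A(G)` of a finite simple graph. -/
def Q (G : SimpleGraph V) : Matrix V V ℝ :=
  letI : DecidableRel G.Adj := Classical.decRel _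
  G.degMatrix ℝ + G.adjMatrix ℝ

lemma Q_isHermitian (G : SimpleGraph V) : (Q G).IsHermitian := by
  letI : DecidableRel G.Adj := Classical.decRel _
  have h : Q G = G.degMatrix ℝ + G.adjMatrix ℝ := rfl
  rw [h, Matrix.IsHermitian]
  ext i j
  simp [Matrix.conjTranspose_apply, SimpleGraph.degMatrix, Matrix.diagonal,
    SimpleGraph.adjMatrix_apply, SimpleGraph.adj_comm]
  rcases eq_or_ne i j with rfl | hij
  · simp
  · simp [hij, Ne.symm hij]

/-- The (unordered) signless Laplacian eigenvalues of `G`, listed with multiplicity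
(indexed by the vertices). -/
def eigs (G : SimpleGraph V) : V → ℝ := (Q_isHermitian G).eigenvalues

/-- `S α G`: the sum of the α-th (real) powers of the nonzero signless Laplacian
eigenvalues of `G`. -/
def S (α : ℝ) (G : SimpleGraph V) : ℝ :=
  ∑ v ∈ Finset.univ.filter (fun v => eigs G v ≠ 0), eigs G v ^ α

/-- The Laplacian matrix `L(G) = D(G) - A(G)`. -/
def L (G : SimpleGraph V) : Matrix V V ℝ :=
  letI : DecidableRel G.Adj := Classical.decRel _
  G.lapMatrix ℝ

lemma L_isHermitian (G : SimpleGraph V) : (L G).IsHermitian := by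
  letI : DecidableRel G.Adj := Classical.decRel _
  have h : L G = G.lapMatrix ℝ := rfl
  rw [h]
  exact (SimpleGraph.posSemidef_lapMatrix ℝ G).1

/-- The (unordered) Laplacian eigenvalues of `G`, listed with multiplicity. -/
def lapEigs (G : SimpleGraph V) : V → ℝ := (L_isHermitian G).eigenvalues

/-- The Laplacian energy `E_L(G) = ∑ μᵢ²`. -/
def EL (G : SimpleGraph V) : ℝ := ∑ v : V, lapEigs G v ^ 2

/-- The join `G ∨ H` of two graphs: the disjoint union together with all edges
joining a vertex of `G` to a vertex of `H`. -/
def join {α β : Type*} (G : SimpleGraph α) (H : SimpleGraph β) : SimpleGraph (α ⊕ β) :=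
  (Gᶜ ⊕g Hᶜ)ᶜ

/-- The graph `G(i) = K_k ∨ (K_i ∪ K_{n-k-i})`. -/
def Gik (n k i : ℕ) : SimpleGraph (Fin k ⊕ (Fin i ⊕ Fin (n - k - i))) :=
  join (⊤ : SimpleGraph (Fin k))
    ((⊤ : SimpleGraph (Fin i)) ⊕g (⊤ : SimpleGraph (Fin (n - k - i))))

/-- `G` has vertex connectivity at most `k`: either `k ≥ n - 1`, or there is a set of
at most `k` vertices whose deletion leaves a disconnected graph. -/
def ConnAtMost (G : SimpleGraph V) (k : ℕ) : Prop :=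
  Fintype.card V ≤ k + 1 ∨
    ∃ U : Finset V, U.card ≤ k ∧ ¬ (G.induce ((↑U : Set V)ᶜ)).Connected

/-! ### Laplacian energy as a degree sum -/

/-- The sum `∑ v, d(v) (d(v) + 1)` over the vertex degrees of `G`. -/
def degSum {W : Type*} [Fintype W] (G : SimpleGraph W) : ℝ :=
  letI : DecidableRel G.Adj := Classical.decRel _
  ∑ v, (G.degree v : ℝ) * (G.degree v + 1)

lemma EL_eq_degSum (G : SimpleGraph V) : EL G = degSum G := by
  let _ : DecidableRel G.Adj := Classical.decRel _
  have htr : EL G = (L G * L G).trace := by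
    have hs := (L_isHermitian G).spectral_theorem
    have hU := Unitary.star_mul_self_of_mem (L_isHermitian G).eigenvectorUnitary.2
    conv_rhs => rw [hs, ← map_mul]
    rw [Unitary.conjStarAlgAut_apply, Matrix.trace_mul_comm, ← Matrix.mul_assoc, hU,
      Matrix.one_mul, Matrix.diagonal_mul_diagonal, Matrix.trace_diagonal]
    simp [EL, lapEigs, sq]
  have hL : ∀ v w, L G v w = (if v = w then (G.degree v : ℝ) else 0) -
      (if G.Adj v w then 1 else 0) := by
    intro v w
    change G.lapMatrix ℝ v w = _
    simp [SimpleGraph.lapMatrix, SimpleGraph.degMatrix, Matrix.diagonal_apply,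
      SimpleGraph.adjMatrix_apply]
  rw [htr, Matrix.trace]
  change _ = ∑ v, (G.degree v : ℝ) * (G.degree v + 1)
  refine Finset.sum_congr rfl fun v _ => ?_
  have hterm : ∀ w, L G v w * L G w v =
      (if v = w then (G.degree v : ℝ) ^ 2 else 0) + (if G.Adj v w then 1 else 0) := by
    intro w
    rw [hL, hL]
    by_cases h : v = w
    · subst h; simp [sq]
    · by_cases ha : G.Adj v w
      · simp [h, Ne.symm h, ha, ha.symm]
      · simp [h, Ne.symm h, ha]
  rw [Matrix.diag_apply, Matrix.mul_apply]
  simp_rw [hterm]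
  rw [Finset.sum_add_distrib, Finset.sum_ite_eq, Finset.sum_boole,
    ← SimpleGraph.card_neighborFinset_eq_degree, SimpleGraph.neighborFinset_eq_filter]
  simp
  ring

lemma degSum_iso {W W' : Type*} [Fintype W] [Fintype W'] {G : SimpleGraph W}
    {H : SimpleGraph W'} (e : G ≃g H) : degSum G = degSum H := by
  classical
  unfold degSum
  refine Fintype.sum_equiv e.toEquiv _ _ fun v => ?_
  have := e.degree_eq v
  simp only [RelIso.coe_fn_toEquiv]
  rw [← this]

lemma degSum_mono {G H : SimpleGraph V} (h : G ≤ H) : degSum G ≤ degSum H := by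
  unfold degSum
  refine Finset.sum_le_sum fun v _ => ?_
  let _ : DecidableRel G.Adj := Classical.decRel _
  let _ : DecidableRel H.Adj := Classical.decRel _
  have hd : (G.degree v : ℝ) ≤ H.degree v := by
    exact_mod_cast SimpleGraph.degree_le_of_le h
  gcongr

lemma eq_of_degSum_eq {G H : SimpleGraph V} (h : G ≤ H) (he : degSum G = degSum H) :
    G = H := by
  let _ : DecidableRel G.Adj := Classical.decRel _
  let _ : DecidableRel H.Adj := Classical.decRel _
  have hd : ∀ v, (G.degree v : ℝ) ≤ H.degree v := fun v => by
    exact_mod_cast SimpleGraph.degree_le_of_le h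
  have key := (Finset.sum_eq_sum_iff_of_le (s := Finset.univ)
    (f := fun v => (G.degree v : ℝ) * (G.degree v + 1))
    (g := fun v => (H.degree v : ℝ) * (H.degree v + 1))
    (fun v _ => by have := hd v; gcongr)).1 he
  refine le_antisymm h fun a b hab => ?_
  have h1 := key a (Finset.mem_univ a)
  have h2 : G.degree a = H.degree a := by
    have h0 : (0 : ℝ) ≤ G.degree a := by positivity
    have : (G.degree a : ℝ) = H.degree a := by
      have := hd a
      nlinarith
    exact_mod_cast this
  have hsub : G.neighborFinset a ⊆ H.neighborFinset a := fun x hx => by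
    rw [SimpleGraph.mem_neighborFinset] at hx ⊢
    exact h hx
  have := Finset.eq_of_subset_of_card_le hsub (le_of_eq h2.symm)
  have hb : b ∈ H.neighborFinset a := by simpa using hab
  rw [← this] at hb
  simpa using hb

/-! ### Complete graphs with a removed complete bipartite part -/

/-- The complete graph with all edges between `S` and `T` removed. -/
def blk {W : Type*} (S T : Finset W) : SimpleGraph W where
  Adj a b := a ≠ b ∧ ¬(a ∈ S ∧ b ∈ T) ∧ ¬(a ∈ T ∧ b ∈ S)
  symm := ⟨fun _ _ h => ⟨h.1.symm, fun h' => h.2.2 ⟨h'.2, h'.1⟩, fun h' => h.2.1 ⟨h'.2, h'.1⟩⟩⟩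
  loopless := ⟨fun _ h => h.1 rfl⟩

lemma blk_comm {W : Type*} (S T : Finset W) : blk S T = blk T S := by
  ext a b
  simp only [blk]
  tauto

lemma degSum_blk {W : Type*} [Fintype W] (S T : Finset W) (hST : Disjoint S T) :
    degSum (blk S T) = (Fintype.card W : ℝ) ^ 2 * (Fintype.card W - 1) -
      (#S : ℝ) * #T * (4 * Fintype.card W - 2 - (#S + #T)) := by
  classical
  let _ : DecidableRel (blk S T).Adj := Classical.decRel _
  set N : ℝ := (Fintype.card W : ℝ)
  have hdeg : ∀ v, ((blk S T).degree v : ℝ) =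
      N - 1 - (if v ∈ S then (#T : ℝ) else 0) - (if v ∈ T then (#S : ℝ) else 0) := by
    intro v
    -- the non-neighbours of `v`, other than `v` itself
    let B : Finset W := if v ∈ S then T else if v ∈ T then S else ∅
    have hvB : v ∉ B := by
      have h1 : v ∈ S → v ∉ T := fun h => Finset.disjoint_left.1 hST h
      by_cases hS : v ∈ S
      · simp [B, hS, h1 hS]
      · by_cases hT : v ∈ T <;> simp [B, hS, hT]
    have hn : (blk S T).neighborFinset v = (insert v B)ᶜ := by
      ext w
      have h1 : v ∈ S → v ∉ T := fun h => Finset.disjoint_left.1 hST h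
      rw [SimpleGraph.mem_neighborFinset, Finset.mem_compl, Finset.mem_insert]
      by_cases hS : v ∈ S
      · simp [B, blk, hS, h1 hS, eq_comm]
      · by_cases hT : v ∈ T <;> simp [B, blk, hS, hT, eq_comm]
    have hc : ((blk S T).degree v : ℝ) = N - (#B + 1) := by
      rw [← SimpleGraph.card_neighborFinset_eq_degree, hn, Finset.card_compl,
        Nat.cast_sub (Finset.card_le_univ _), Finset.card_insert_of_notMem hvB]
      push_cast
      rfl
    rw [hc]
    have h1 : v ∈ S → v ∉ T := fun h => Finset.disjoint_left.1 hST h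
    by_cases hS : v ∈ S
    · simp [B, hS, h1 hS]; ring
    · by_cases hT : v ∈ T
      · simp [B, hS, hT]; ring
      · simp [B, hS, hT]
  have hterm : ∀ v, ((blk S T).degree v : ℝ) * ((blk S T).degree v + 1) =
      N * (N - 1) - (if v ∈ S then (#T : ℝ) * (2 * N - 1 - #T) else 0)
        - (if v ∈ T then (#S : ℝ) * (2 * N - 1 - #S) else 0) := by
    intro v
    rw [hdeg]
    have h1 : v ∈ S → v ∉ T := fun h => Finset.disjoint_left.1 hST h
    by_cases hS : v ∈ S
    · simp [hS, h1 hS]; ring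
    · by_cases hT : v ∈ T
      · simp [hS, hT]; ring
      · simp [hS, hT]; ring
  change ∑ v, ((blk S T).degree v : ℝ) * ((blk S T).degree v + 1) = _
  simp_rw [hterm]
  rw [Finset.sum_sub_distrib, Finset.sum_sub_distrib, Finset.sum_ite_mem, Finset.sum_ite_mem]
  simp only [Finset.univ_inter, Finset.sum_const, nsmul_eq_mul, Finset.card_univ]
  ring

lemma degSum_Gik (n k : ℕ) (hk : k + 1 ≤ n) :
    degSum (Gik n k 1) =
      (n : ℝ) ^ 2 * (n - 1) - ((n : ℝ) - k - 1) * (3 * n - 2 + k) := by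
  have h : Gik n k 1 = blk
      (Finset.univ.map (Function.Embedding.inl.trans Function.Embedding.inr))
      (Finset.univ.map (Function.Embedding.inr.trans Function.Embedding.inr)) := by
    ext a b
    rcases a with a | a | a <;> rcases b with b | b | b <;> simp [Gik, join, blk] <;>
      exact Subsingleton.elim _ _
  rw [h, degSum_blk]
  · have hc : (((n - k - 1 : ℕ)) : ℝ) = n - k - 1 := by
      rw [Nat.cast_sub (by omega), Nat.cast_sub (by omega)]; simp
    simp only [Fintype.card_sum, Fintype.card_fin, Finset.card_map, Finset.card_univ]
    push_cast
    rw [hc]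
    ring
  · rw [Finset.disjoint_left]
    simp

/-- With a singleton on one side, `blk` is the extremal graph. -/
lemma blk_singleton_iso (n k : ℕ) (hk : k + 1 ≤ n) (hcard : Fintype.card V = n) (x : V)
    (T : Finset V) (hx : x ∉ T) (hT : #T = n - k - 1) :
    Nonempty (blk {x} T ≃g Gik n k 1) := by
  have e1 : Nonempty (Fin k ≃ {v // v ∉ insert x T}) := by
    refine ⟨Fintype.equivOfCardEq ?_⟩
    rw [Fintype.card_fin, Fintype.card_subtype_compl, hcard, Fintype.card_coe,
      Finset.card_insert_of_notMem hx]
    omega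
  have e2 : Nonempty (Fin (n - k - 1) ≃ {v // v ∈ T}) :=
    ⟨Fintype.equivOfCardEq (by simp [hT])⟩
  obtain ⟨e1⟩ := e1
  obtain ⟨e2⟩ := e2
  let f : Fin k ⊕ (Fin 1 ⊕ Fin (n - k - 1)) → V :=
    Sum.elim (fun i => (e1 i).1) (Sum.elim (fun _ => x) (fun j => (e2 j).1))
  have p1 : ∀ i, (e1 i).1 ≠ x ∧ (e1 i).1 ∉ T := fun i => by
    have := (e1 i).2
    simpa [not_or] using this
  have p2 : ∀ j, (e2 j).1 ∈ T := fun j => (e2 j).2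
  have p3 : ∀ j, (e2 j).1 ≠ x := fun j h => hx (h ▸ p2 j)
  have p4 : ∀ i j, (e1 i).1 ≠ (e2 j).1 := fun i j h => (p1 i).2 (h ▸ p2 j)
  have hinj : Function.Injective f := by
    rintro (a | a | a) (b | b | b) h
    · simpa [f, Subtype.ext_iff.symm] using h
    · exact absurd h (p1 a).1
    · exact absurd h (p4 a b)
    · exact absurd h.symm (p1 b).1
    · rw [Subsingleton.elim a b]
    · exact absurd h.symm (p3 b)
    · exact absurd h.symm (p4 b a)
    · exact absurd h (p3 a)
    · simpa [f, Subtype.ext_iff.symm] using h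
  have hbij : Function.Bijective f := by
    rw [Fintype.bijective_iff_injective_and_card]
    refine ⟨hinj, ?_⟩
    simp [hcard]
    omega
  let e : Gik n k 1 ≃g blk {x} T :=
    { toEquiv := Equiv.ofBijective f hbij
      map_rel_iff' := by
        intro a b
        have hab : f a = f b ↔ a = b := hinj.eq_iff
        change (f a ≠ f b ∧ _) ↔ _
        rw [Ne, hab]
        simp only [Equiv.ofBijective_apply, Finset.mem_singleton]
        rcases a with a | a | a <;> rcases b with b | b | b <;>
          simp [Gik, join, f, p1, p2, p3, hx] }
  exact ⟨e.symm⟩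

/-! ### Arithmetic of the bound -/

/-- The arithmetic core: minimal loss of energy over all pairs of part sizes, with the
equality case. -/
lemma loss_bound (n k s t : ℕ) (hs : 1 ≤ s) (ht : 1 ≤ t) (hn : s + t ≤ n)
    (hk : n ≤ s + t + k) (hkn : k + 1 ≤ n) :
    ((n : ℝ) - k - 1) * (3 * n - 2 + k) ≤ (s : ℝ) * t * (4 * n - 2 - (s + t)) ∧
    ((s : ℝ) * t * (4 * n - 2 - (s + t)) = ((n : ℝ) - k - 1) * (3 * n - 2 + k) →
      s + t + k = n ∧ (s = 1 ∨ t = 1)) := by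
  have hs' : (1 : ℝ) ≤ s := by exact_mod_cast hs
  have ht' : (1 : ℝ) ≤ t := by exact_mod_cast ht
  have hn' : (s : ℝ) + t ≤ n := by exact_mod_cast hn
  have hk' : (n : ℝ) ≤ s + t + k := by exact_mod_cast hk
  have hkn' : (k : ℝ) + 1 ≤ n := by exact_mod_cast hkn
  have hk0 : (0 : ℝ) ≤ k := by positivity
  -- the excess splits into the defects of `s t ≥ s + t - 1` and of `s + t ≥ n - k`
  have hid : (s : ℝ) * t * (4 * n - 2 - (s + t)) - ((n : ℝ) - k - 1) * (3 * n - 2 + k) =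
      ((s : ℝ) - 1) * (t - 1) * (4 * n - 2 - (s + t)) +
        (s + t + k - n) * (3 * n - 1 - (s + t) + k) := by ring
  have hA : (0 : ℝ) < 4 * n - 2 - (s + t) := by linarith
  have hB : (0 : ℝ) < 3 * n - 1 - (s + t) + k := by linarith
  have h1 : 0 ≤ ((s : ℝ) - 1) * (t - 1) * (4 * n - 2 - (s + t)) :=
    mul_nonneg (mul_nonneg (by linarith) (by linarith)) hA.le
  have h2 : 0 ≤ ((s : ℝ) + t + k - n) * (3 * n - 1 - (s + t) + k) :=
    mul_nonneg (by linarith) hB.le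
  refine ⟨by linarith, fun he => ?_⟩
  have z1 : ((s : ℝ) - 1) * (t - 1) * (4 * n - 2 - (s + t)) = 0 := by linarith
  have z2 : ((s : ℝ) + t + k - n) * (3 * n - 1 - (s + t) + k) = 0 := by linarith
  constructor
  · rcases mul_eq_zero.1 z2 with h | h
    · have : (s : ℝ) + t + k = n := by linarith
      exact_mod_cast this
    · linarith
  · rcases mul_eq_zero.1 z1 with h | h
    · rcases mul_eq_zero.1 h with h | h
      · left
        have : (s : ℝ) = 1 := by linarith
        exact_mod_cast this
      · right
        have : (t : ℝ) = 1 := by linarith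
        exact_mod_cast this
    · linarith

/-- The bound of the theorem with the square roots eliminated. -/
lemma bound_eq (n k : ℕ) (hk : 1 ≤ k) (hkn : k + 1 ≤ n) :
    k * ((n : ℝ) - 2) ^ 2 + ((n : ℝ) - k - 2) * ((n : ℝ) - 3) ^ 2 + ((n : ℝ) - 2 + k / 2 + (1 / 2) * Real.sqrt (((k : ℝ) - 2 * n) ^ 2 + 16 * ((k : ℝ) - n + 1))) ^ 2 + ((n : ℝ) - 2 + k / 2 - (1 / 2) * Real.sqrt (((k : ℝ) - 2 * n) ^ 2 + 16 * ((k : ℝ) - n + 1))) ^ 2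
      = (n : ℝ) ^ 2 * (n - 1) - ((n : ℝ) - k - 1) * (3 * n - 2 + k) := by
  have hk' : (1 : ℝ) ≤ k := by exact_mod_cast hk
  have hkn' : (k : ℝ) + 1 ≤ n := by exact_mod_cast hkn
  have hD : 0 ≤ ((k : ℝ) - 2 * n) ^ 2 + 16 * ((k : ℝ) - n + 1) := by
    -- with `m = n - k - 1 ≥ 0` the value is at least `(2 m + 3)² - 16 m > 0`
    nlinarith [sq_nonneg (2 * ((n : ℝ) - k - 1) - 1),
      mul_nonneg (sub_nonneg.2 hkn') (sub_nonneg.2 hk'), sq_nonneg ((k : ℝ) - 1)]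
  have hsq := Real.sq_sqrt hD
  linear_combination (1 / 2 : ℝ) * hsq

/-! ### Disconnecting sets -/

/-- A disconnecting vertex set `U` exhibits `G` as a subgraph of some `blk S T` with `S`, `T`
nonempty and covering all but `#U` vertices. The bound on `#U` excludes the degenerate case in which `G - U`
fails to be connected only because it has no vertices. -/
lemma exists_le_blk (G : SimpleGraph V) (U : Finset V) (hU : #U < Fintype.card V)
    (h : ¬ (G.induce ((↑U : Set V)ᶜ)).Connected) :
    ∃ S T : Finset V, Disjoint S T ∧ S.Nonempty ∧ T.Nonempty ∧
      #S + #T + #U = Fintype.card V ∧ G ≤ blk S T := by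
  classical
  obtain ⟨z, hz⟩ : ∃ z, z ∉ U := by
    by_contra! hall
    have : U = Finset.univ := Finset.eq_univ_of_forall hall
    rw [this, Finset.card_univ] at hU
    exact lt_irrefl _ hU
  have hne : Nonempty ↥((↑U : Set V)ᶜ) := ⟨⟨z, by simpa using hz⟩⟩
  have hp : ¬ (G.induce ((↑U : Set V)ᶜ)).Preconnected := fun hp => h ⟨hp⟩
  unfold SimpleGraph.Preconnected at hp
  push Not at hp
  obtain ⟨a, b, hab⟩ := hp
  -- `S` is the component of `a` in `G - U`, and `T` the rest of `G - U`
  let P : V → Prop := fun v => ∃ hv : v ∈ ((↑U : Set V)ᶜ),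
    (G.induce ((↑U : Set V)ᶜ)).Reachable a ⟨v, hv⟩
  let S : Finset V := Finset.univ.filter P
  let T : Finset V := Uᶜ.filter fun v => ¬ P v
  have hSU : S = Uᶜ.filter P := by
    ext v
    simp only [S, Finset.mem_filter, Finset.mem_univ, true_and, Finset.mem_compl]
    exact ⟨fun hv => ⟨by simpa using hv.1, hv⟩, fun hv => hv.2⟩
  have hno : ∀ v w, v ∈ S → w ∈ T → ¬ G.Adj v w := by
    intro v w hv hw hadj
    simp only [S, T, Finset.mem_filter, Finset.mem_univ, true_and, Finset.mem_compl] at hv hw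
    obtain ⟨hvU, hr⟩ := hv
    have hwU : w ∈ ((↑U : Set V)ᶜ) := by simpa using hw.1
    refine hw.2 ⟨hwU, hr.trans (SimpleGraph.Adj.reachable ?_)⟩
    simpa using hadj
  refine ⟨S, T, ?_, ⟨a.1, ?_⟩, ⟨b.1, ?_⟩, ?_, ?_⟩
  · rw [hSU]
    exact Finset.disjoint_filter_filter_not _ _ _
  · simp only [S, Finset.mem_filter, Finset.mem_univ, true_and]
    exact ⟨a.2, SimpleGraph.Reachable.refl _⟩
  · simp only [T, Finset.mem_filter, Finset.mem_compl]
    exact ⟨fun hb => b.2 (Finset.mem_coe.2 hb), fun ⟨_, hr⟩ => hab hr⟩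
  · rw [hSU, Finset.card_filter_add_card_filter_not, Finset.card_compl]
    omega
  · intro v w hadj
    exact ⟨hadj.ne, fun hh => hno v w hh.1 hh.2 hadj, fun hh => hno w v hh.2 hh.1 hadj.symm⟩


theorem lap_energy_le_of_connAtMost (n k : ℕ) (hk : 1 ≤ k) (hkn : k ≤ n - 1)
    (hcard : Fintype.card V = n) (G : SimpleGraph V) (hconn : G.Connected)
    (hvc : ConnAtMost G k) :
    EL G ≤ k * ((n : ℝ) - 2) ^ 2 + ((n : ℝ) - k - 2) * ((n : ℝ) - 3) ^ 2 + ((n : ℝ) - 2 + k / 2 + (1 / 2) * Real.sqrt (((k : ℝ) - 2 * n) ^ 2 + 16 * ((k : ℝ) - n + 1))) ^ 2 + ((n : ℝ) - 2 + k / 2 - (1 / 2) * Real.sqrt (((k : ℝ) - 2 * n) ^ 2 + 16 * ((k : ℝ) - n + 1))) ^ 2 ∧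
    (EL G = k * ((n : ℝ) - 2) ^ 2 + ((n : ℝ) - k - 2) * ((n : ℝ) - 3) ^ 2 + ((n : ℝ) - 2 + k / 2 + (1 / 2) * Real.sqrt (((k : ℝ) - 2 * n) ^ 2 + 16 * ((k : ℝ) - n + 1))) ^ 2 + ((n : ℝ) - 2 + k / 2 - (1 / 2) * Real.sqrt (((k : ℝ) - 2 * n) ^ 2 + 16 * ((k : ℝ) - n + 1))) ^ 2 ↔
      Nonempty (G ≃g Gik n k 1)) := by
  have hn : k + 1 ≤ n := by
    have : 0 < n := hcard ▸ Fintype.card_pos_iff.2 hconn.nonempty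
    omega
  rw [bound_eq n k hk hn, EL_eq_degSum]
  have hback : Nonempty (G ≃g Gik n k 1) → degSum G =
      (n : ℝ) ^ 2 * (n - 1) - ((n : ℝ) - k - 1) * (3 * n - 2 + k) := by
    rintro ⟨e⟩
    rw [degSum_iso e, degSum_Gik n k hn]
  rcases hvc with hbig | ⟨U, hU, hdis⟩
  · -- here `k = n - 1`, and `blk {x} ∅` is the complete graph
    obtain ⟨x⟩ := hconn.nonempty
    have hle : G ≤ blk {x} ∅ := fun a b h => ⟨h.ne, by simp, by simp⟩
    have hval := degSum_blk {x} (∅ : Finset V) (by simp)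
    have hkeq : (k : ℝ) = n - 1 := by
      have : k + 1 = n := by omega
      rw [← this]; simp
    rw [hcard] at hval
    simp only [Finset.card_empty, Nat.cast_zero, mul_zero, zero_mul] at hval
    have h0 : ((n : ℝ) - k - 1) * (3 * n - 2 + k) = 0 := by rw [hkeq]; ring
    rw [h0] at hback ⊢
    refine ⟨hval ▸ degSum_mono hle, fun he => ?_, hback⟩
    rw [eq_of_degSum_eq hle (he.trans hval.symm)]
    exact blk_singleton_iso n k hn hcard x ∅ (by simp) (by simp; omega)
  · obtain ⟨S, T, hST, hS, hT, hc, hle⟩ := exists_le_blk G U (by omega) hdis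
    rw [hcard] at hc
    have hval := degSum_blk S T hST
    rw [hcard] at hval
    obtain ⟨hb, hbe⟩ := loss_bound n k #S #T hS.card_pos hT.card_pos (by omega) (by omega) hn
    have hm := degSum_mono hle
    refine ⟨by linarith, fun he => ?_, hback⟩
    obtain ⟨hsum, hone⟩ := hbe (by linarith)
    rw [eq_of_degSum_eq hle (by linarith)]
    rcases hone with h1 | h1
    · obtain ⟨x, rfl⟩ := Finset.card_eq_one.1 h1
      exact blk_singleton_iso n k hn hcard x T (by simpa using hST) (by omega)
    · obtain ⟨x, rfl⟩ := Finset.card_eq_one.1 h1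
      rw [blk_comm]
      exact blk_singleton_iso n k hn hcard x S (by simpa using hST) (by omega)


end SLP
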